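/- arXiv:2404.05664 — 4 statements merged into one kernel-verified Lean document; each statement's English description precedes it below -/
import Mathlib

section
/- For all n ≥ 0 and 0 ≤ ℓ ≤ n, totalD(n,ℓ) = ℓ * C(2n, n-ℓ), where totalD(n,ℓ) is the sum over all ordered trees T with n edges and all nodes v at level ℓ in T of the number of nodes visited before v in the depth-first (pre-order) traversal of T. -/
open scoped Classical

/-- Height (number of up-steps minus number of down-steps) after the first `k` steps
of the word `w`, where `true` encodes an up-step and `false` a down-step. -/
def heightAt (n : ℕ) (w : Fin n → Bool) (k : ℕ) : ℤ :=
  ((Finset.univ.filter (fun i : Fin n => (i : ℕ) < k ∧ w i = true)).card : ℤ) -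
  ((Finset.univ.filter (fun i : Fin n => (i : ℕ) < k ∧ w i = false)).card : ℤ)

/-- `w` is a Dyck word of semilength `n` (the standard encoding of an ordered tree
with `n` edges via its pre-order traversal: `true` = step away from the root). -/
def IsDyck (n : ℕ) (w : Fin (2 * n) → Bool) : Prop :=
  (Finset.univ.filter (fun i : Fin (2 * n) => w i = true)).card = n ∧
  ∀ k : ℕ, k ≤ 2 * n → 0 ≤ heightAt (2 * n) w k

/-- The ordered trees with `n` edges, encoded as Dyck words. -/
noncomputable def dyckWords (n : ℕ) : Finset (Fin (2 * n) → Bool) :=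
  Finset.univ.filter (fun w => IsDyck n w)

/-- The nodes of the tree encoded by `w` : `none` is the root and `some i` for an
up-step `i` (`w i = true`) is the node this step leads to. -/
def isNode (n : ℕ) (w : Fin (2 * n) → Bool) : Option (Fin (2 * n)) → Prop
  | none => True
  | some i => w i = true

/-- The level (distance to the root) of a node. -/
def nodeLevel (n : ℕ) (w : Fin (2 * n) → Bool) : Option (Fin (2 * n)) → ℤ
  | none => 0
  | some i => heightAt (2 * n) w ((i : ℕ) + 1)

/-- The set of nodes at level `ℓ` of the tree encoded by `w`. -/
noncomputable def nodesAtLevel (n : ℕ) (w : Fin (2 * n) → Bool) (ℓ : ℕ) :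
    Finset (Option (Fin (2 * n))) :=
  Finset.univ.filter (fun v => isNode n w v ∧ nodeLevel n w v = (ℓ : ℤ))

/-- The number of nodes visited before the given node in the depth-first (pre-order)
traversal: the root comes first, and the non-root nodes appear in the order of their
up-steps in the Dyck word. -/
noncomputable def dfsScore (n : ℕ) (w : Fin (2 * n) → Bool) : Option (Fin (2 * n)) → ℕ
  | none => 0
  | some i => 1 +
      (Finset.univ.filter (fun j : Fin (2 * n) => (j : ℕ) < (i : ℕ) ∧ w j = true)).card

/-- The number of nodes visited before the given node in breadth-first search:
nodes are visited level by level, and from left to right within a level. -/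
noncomputable def bfsScore (n : ℕ) (w : Fin (2 * n) → Bool) : Option (Fin (2 * n)) → ℕ
  | none => 0
  | some i => 1 +
      (Finset.univ.filter (fun j : Fin (2 * n) =>
        w j = true ∧ (nodeLevel n w (some j) < nodeLevel n w (some i) ∨
          (nodeLevel n w (some j) = nodeLevel n w (some i) ∧ (j : ℕ) < (i : ℕ))))).card

/-- Sum of the dfs scores of all nodes at level `ℓ` over all ordered trees with `n` edges. -/
noncomputable def totalD (n ℓ : ℕ) : ℕ :=
  ∑ w ∈ dyckWords n, ∑ v ∈ nodesAtLevel n w ℓ, dfsScore n w v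

/-- Sum of the bfs scores of all nodes at level `ℓ` over all ordered trees with `n` edges. -/
noncomputable def totalB (n ℓ : ℕ) : ℕ :=
  ∑ w ∈ dyckWords n, ∑ v ∈ nodesAtLevel n w ℓ, bfsScore n w v

/-- Total number of nodes at level `ℓ` among all ordered trees with `n` edges. -/
noncomputable def levelCount (n ℓ : ℕ) : ℕ :=
  ∑ w ∈ dyckWords n, (nodesAtLevel n w ℓ).card

/-!
A node at level `ℓ` that is reached by step `i` has dfs score `(i + 1 + ℓ) / 2`, because the first
`i + 1` steps lead to height `ℓ`. Writing `N` for the number of nonnegative walks and `W` for the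
number of free walks with given length and endpoints, cutting the contour walk of a tree at such a
step gives `2 * totalD n ℓ = ∑ i, (i + 1 + ℓ) * N_i(0, ℓ - 1) * N_{2n-1-i}(ℓ, 0)`.

The weight is exactly the one for which reflection removes the sign constraint from the first
factor: `(i + 1 + ℓ) * N_i(0, ℓ - 1) = 2ℓ * W_i(0, ℓ - 1)`. The remaining convolution of `N` and
`W`, with time reversed, decomposes the free walks from `ℓ` to `-ℓ` of length `2n` at their first
step below `0`, and there are `C(2n, n - ℓ)` of these.
-/

open scoped Finset

/-- A `±1` walk with steps `w`, started at height `a`, that ends at `b` and never goes below `0`,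
its starting point included. -/
def IsNonnegWalk {m : ℕ} (a b : ℤ) (w : Fin m → Bool) : Prop :=
  (∀ k ≤ m, 0 ≤ a + heightAt m w k) ∧ a + heightAt m w m = b

/-- The number of `m`-step walks with displacement `d`; flipping all steps shows that it depends
only on `|d|`. -/
noncomputable def walkCount (m : ℕ) (d : ℤ) : ℕ :=
  #{w : Fin m → Bool | heightAt m w m = d}

/-- The number of `m`-step nonnegative walks from `a` to `b`. -/
noncomputable def nonnegWalkCount (m : ℕ) (a b : ℤ) : ℕ :=
  #{w : Fin m → Bool | IsNonnegWalk a b w}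

theorem heightAt_eq_sum (m : ℕ) (w : Fin m → Bool) (k : ℕ) :
    heightAt m w k = ∑ i : Fin m, if (i : ℕ) < k then if w i then 1 else -1 else 0 := by
  simp only [heightAt, Finset.card_filter]
  push_cast
  rw [← Finset.sum_sub_distrib]
  refine Finset.sum_congr rfl fun i _ => ?_
  cases w i <;> by_cases hk : (i : ℕ) < k <;> simp [hk]

theorem heightAt_zero (m : ℕ) (w : Fin m → Bool) : heightAt m w 0 = 0 := by
  simp [heightAt_eq_sum]

theorem heightAt_cons (m : ℕ) (s : Bool) (w : Fin m → Bool) (k : ℕ) :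
    heightAt (m + 1) (Fin.cons s w) (k + 1) = (if s then 1 else -1) + heightAt m w k := by
  simp [heightAt_eq_sum, Fin.sum_univ_succ]

theorem heightAt_le (m : ℕ) (w : Fin m → Bool) (k : ℕ) : heightAt m w k ≤ m := by
  have := Finset.card_le_univ {i : Fin m | i < k ∧ w i = true}
  rw [Fintype.card_fin] at this
  unfold heightAt
  omega

theorem two_mul_card_upSteps {m : ℕ} (w : Fin m → Bool) {k : ℕ} (hk : k ≤ m) :
    (2 * #{i : Fin m | i < k ∧ w i = true} : ℤ) = k + heightAt m w k := by
  have hcard : #{i : Fin m | i < k ∧ w i = true} + #{i : Fin m | i < k ∧ w i = false} = k := by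
    have hsplit := Finset.card_filter_add_card_filter_not
      (s := {i : Fin m | i < k}) (fun i => w i = true)
    rw [← Fintype.card_subtype, Fintype.card_fin_lt_of_le hk] at hsplit
    simpa only [Finset.filter_filter, Bool.not_eq_true] using hsplit
  unfold heightAt
  omega

theorem isNonnegWalk_cons {m : ℕ} (a b : ℤ) (s : Bool) (w : Fin m → Bool) :
    IsNonnegWalk (m := m + 1) a b (Fin.cons s w) ↔
      0 ≤ a ∧ IsNonnegWalk (a + if s then 1 else -1) b w := by
  have hforall : (∀ k ≤ m + 1, 0 ≤ a + heightAt (m + 1) (Fin.cons s w) k) ↔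
      0 ≤ a ∧ ∀ k ≤ m, 0 ≤ (a + if s then 1 else -1) + heightAt m w k := by
    rw [← Nat.and_forall_add_one]
    simp [heightAt_zero, heightAt_cons, add_assoc]
  rw [IsNonnegWalk, IsNonnegWalk, hforall, heightAt_cons, add_assoc, and_assoc]

theorem not_isNonnegWalk_of_neg {m : ℕ} {a : ℤ} (b : ℤ) (w : Fin m → Bool) (ha : a < 0) :
    ¬ IsNonnegWalk a b w := fun hw => by
  simpa [heightAt_zero, ha.not_ge] using hw.1 0

theorem card_filter_bool_cons {m : ℕ} (p : (Fin (m + 1) → Bool) → Prop)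
    [DecidablePred p] :
    #{w | p w} = #{w : Fin m → Bool | p (Fin.cons true w)} +
      #{w : Fin m → Bool | p (Fin.cons false w)} := by
  simp only [Finset.card_filter]
  rw [← (Fin.consEquiv fun _ => Bool).sum_comp, Fintype.sum_prod_type, Fintype.sum_bool]
  rfl

theorem walkCount_zero (d : ℤ) : walkCount 0 d = if d = 0 then 1 else 0 := by
  simp [walkCount, heightAt_zero, Finset.filter_const, eq_comm, apply_ite]

theorem walkCount_succ (m : ℕ) (d : ℤ) :
    walkCount (m + 1) d = walkCount m (d - 1) + walkCount m (d + 1) := by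
  simp [walkCount, card_filter_bool_cons, heightAt_cons, eq_sub_iff_add_eq', neg_add_eq_iff_eq_add,
    add_comm d]

theorem walkCount_eq_zero_of_lt {m : ℕ} {d : ℤ} (h : m < d) : walkCount m d = 0 := by
  rw [walkCount, Finset.card_eq_zero, Finset.filter_eq_empty_iff]
  intro w _
  have := heightAt_le m w m
  omega

theorem walkCount_sub_two_mul (m k : ℕ) : walkCount m (m - 2 * k) = m.choose k := by
  induction m generalizing k with
  | zero => cases k <;> grind [walkCount_zero]
  | succ m ih =>
    rw [walkCount_succ]
    cases k with
    | zero =>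
      rw [walkCount_eq_zero_of_lt (d := _ + 1) (by push_cast; omega)]
      simpa using ih 0
    | succ k =>
      rw [Nat.choose_succ_succ, ← ih k, ← ih (k + 1), add_comm]
      congr 2 <;> push_cast <;> ring

-- For `d = m - 2 * k` this is twice `k * C(m, k) = (m - k + 1) * C(m, k - 1)`.
theorem sub_mul_walkCount (m : ℕ) (d : ℤ) :
    (m - d) * walkCount m d = (m + d + 2) * walkCount m (d + 2) := by
  induction m generalizing d with
  | zero => grind [walkCount_zero]
  | succ m ih =>
    have ih_pred := ih (d - 1)
    have ih_succ := ih (d + 1)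
    rw [show d - 1 + 2 = d + 1 by ring] at ih_pred
    rw [show d + 1 + 2 = d + 2 + 1 by ring] at ih_succ
    rw [walkCount_succ, walkCount_succ, show d + 2 - 1 = d + 1 by ring]
    push_cast
    linear_combination ih_pred + ih_succ

theorem nonnegWalkCount_of_neg (m : ℕ) {a : ℤ} (b : ℤ) (ha : a < 0) :
    nonnegWalkCount m a b = 0 := by
  simp [nonnegWalkCount, not_isNonnegWalk_of_neg _ _ ha]

theorem nonnegWalkCount_zero (a b : ℤ) :
    nonnegWalkCount 0 a b = if 0 ≤ a ∧ a = b then 1 else 0 := by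
  simp [nonnegWalkCount, IsNonnegWalk, heightAt_zero, Finset.filter_const, apply_ite]

theorem nonnegWalkCount_succ (m : ℕ) {a : ℤ} (b : ℤ) (ha : 0 ≤ a) :
    nonnegWalkCount (m + 1) a b =
      nonnegWalkCount m (a + 1) b + nonnegWalkCount m (a - 1) b := by
  simp [nonnegWalkCount, card_filter_bool_cons, isNonnegWalk_cons, ha, sub_eq_add_neg]

-- The reflection principle: reflecting a walk from `a` to `b` that reaches `-1` after its first
-- visit there gives an arbitrary walk from `a` to `-b - 2`.
theorem nonnegWalkCount_add_walkCount (m : ℕ) {a b : ℤ} (ha : -1 ≤ a) (hb : -1 ≤ b) :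
    nonnegWalkCount m a b + walkCount m (a + b + 2) = walkCount m (b - a) := by
  induction m generalizing a with
  | zero => grind [nonnegWalkCount_zero, walkCount_zero]
  | succ m ih =>
    rcases ha.eq_or_lt with rfl | ha
    · rw [nonnegWalkCount_of_neg _ _ (by norm_num), zero_add]
      ring_nf
    · have ih_up := ih (a := a + 1) (by omega)
      have ih_down := ih (a := a - 1) (by omega)
      rw [nonnegWalkCount_succ _ _ (by omega), walkCount_succ, walkCount_succ]
      grind

theorem add_mul_nonnegWalkCount_zero_left (m ℓ : ℕ) :
    (m + 1 + ℓ) * nonnegWalkCount m 0 (ℓ - 1) = 2 * ℓ * walkCount m (ℓ - 1) := by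
  have hreflect := nonnegWalkCount_add_walkCount m (a := 0) (b := ℓ - 1) (by omega) (by omega)
  have hratio := sub_mul_walkCount m (ℓ - 1)
  rw [zero_add, sub_zero] at hreflect
  zify at hreflect ⊢
  linear_combination (m + 1 + ℓ : ℤ) * hreflect + hratio

-- A walk from `a` to `-d - 1` splits uniquely at its first step from `0` to `-1`.
theorem sum_nonnegWalkCount_mul_walkCount (m : ℕ) {a d : ℤ} (ha : 0 ≤ a) (hd : 0 ≤ d) :
    ∑ i : Fin m, nonnegWalkCount i a 0 * walkCount i.rev d = walkCount m (a + d + 1) := by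
  induction m generalizing a with
  | zero => rw [Fin.sum_univ_zero, walkCount_zero, if_neg (by omega)]
  | succ m ih =>
    simp only [Fin.sum_univ_succ, Fin.rev_succ, Fin.val_succ, Fin.val_castSucc,
      nonnegWalkCount_succ _ _ ha, add_mul, Finset.sum_add_distrib, ih (show 0 ≤ a + 1 by omega)]
    rw [add_left_comm, walkCount_succ, add_comm]
    congr 1
    · rcases ha.eq_or_lt with rfl | ha
      · simp [nonnegWalkCount_zero, nonnegWalkCount_of_neg]
      · rw [ih (by omega), Fin.val_zero, nonnegWalkCount_zero, if_neg (by omega)]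
        ring_nf
    · ring_nf

theorem card_nonnegWalks_with_upStep (m : ℕ) (a b c : ℤ) (i : Fin m) :
    #{w : Fin m → Bool | IsNonnegWalk a b w ∧ w i = true ∧ a + heightAt m w (i + 1) = c} =
      nonnegWalkCount i a (c - 1) * nonnegWalkCount i.rev c b := by
  induction m generalizing a with
  | zero => exact i.elim0
  | succ m ih =>
    rcases lt_or_ge a 0 with ha | ha
    · simp [not_isNonnegWalk_of_neg _ _ ha, nonnegWalkCount_of_neg _ _ ha]
    rw [card_filter_bool_cons]
    simp only [isNonnegWalk_cons, heightAt_cons, ha, true_and, ← add_assoc]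
    cases i using Fin.cases with
    | zero =>
      by_cases hac : a + 1 = c
      · subst hac
        have htail : #{w : Fin m → Bool | IsNonnegWalk (a + 1) b w} =
            nonnegWalkCount m (a + 1) b := rfl
        simp [nonnegWalkCount_zero, heightAt_zero, ha, htail]
      · simp [nonnegWalkCount_zero, heightAt_zero, hac, eq_sub_iff_add_eq]
    | succ i =>
      simp only [Fin.cons_succ, Fin.val_succ, Fin.rev_succ, Fin.val_castSucc, ih,
        nonnegWalkCount_succ _ _ ha, add_mul]
      simp [sub_eq_add_neg]

theorem isDyck_iff_isNonnegWalk (n : ℕ) (w : Fin (2 * n) → Bool) :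
    IsDyck n w ↔ IsNonnegWalk 0 0 w := by
  have hups := two_mul_card_upSteps w le_rfl
  simp only [Fin.is_lt, true_and] at hups
  simp only [IsDyck, IsNonnegWalk, zero_add]
  rw [and_comm]
  refine and_congr_right' ?_
  push_cast at hups
  omega

theorem two_mul_dfsScore {n : ℕ} {w : Fin (2 * n) → Bool} {i : Fin (2 * n)} (hi : w i = true) :
    (2 * dfsScore n w (some i) : ℤ) = i + 1 + nodeLevel n w (some i) := by
  have hinsert : ({j | j < (i : ℕ) + 1 ∧ w j = true} : Finset (Fin (2 * n))) =
      insert i ({j | (j : ℕ) < i ∧ w j = true} : Finset (Fin (2 * n))) := by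
    grind
  have hups := two_mul_card_upSteps w (k := i + 1) (by omega)
  rw [hinsert, Finset.card_insert_of_notMem (by simp)] at hups
  simp only [dfsScore, nodeLevel]
  push_cast at hups ⊢
  omega

theorem two_mul_sum_dfsScore (n ℓ : ℕ) (w : Fin (2 * n) → Bool) :
    2 * ∑ v ∈ nodesAtLevel n w ℓ, dfsScore n w v =
      ∑ i : Fin (2 * n) with isNode n w (some i) ∧ nodeLevel n w (some i) = ℓ, (i + 1 + ℓ) := by
  have hroot : (if isNode n w none ∧ nodeLevel n w none = ℓ then dfsScore n w none else 0) = 0 :=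
    ite_self 0
  rw [nodesAtLevel, Finset.sum_filter, Fintype.sum_option, hroot, zero_add, ← Finset.sum_filter,
    Finset.mul_sum]
  refine Finset.sum_congr rfl fun i hi => ?_
  obtain ⟨hnode, hlevel⟩ := (Finset.mem_filter.mp hi).2
  have hscore := two_mul_dfsScore hnode
  omega

theorem two_mul_totalD (n ℓ : ℕ) :
    2 * totalD n ℓ = ∑ i : Fin (2 * n),
      (i + 1 + ℓ) * (nonnegWalkCount i 0 (ℓ - 1) * nonnegWalkCount i.rev ℓ 0) := by
  simp only [totalD, Finset.mul_sum (dyckWords n), two_mul_sum_dfsScore]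
  rw [Finset.sum_comm' (t' := Finset.univ) (s' := fun i => {w | IsNonnegWalk 0 0 w ∧
    w i = true ∧ 0 + heightAt (2 * n) w (i + 1) = ℓ})]
  · simp only [Finset.sum_const, card_nonnegWalks_with_upStep, smul_eq_mul, mul_comm]
  · simp only [Finset.mem_filter_univ, Finset.mem_univ, dyckWords, isDyck_iff_isNonnegWalk,
      zero_add, and_true]
    exact fun _ _ => Iff.rfl

theorem totalD_eq_mul_sum (n ℓ : ℕ) :
    totalD n ℓ =
      ℓ * ∑ i : Fin (2 * n), nonnegWalkCount i.rev ℓ 0 * walkCount i (ℓ - 1) := by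
  refine Nat.eq_of_mul_eq_mul_left two_pos ?_
  rw [two_mul_totalD, ← mul_assoc, Finset.mul_sum]
  refine Finset.sum_congr rfl fun i _ => ?_
  rw [← mul_assoc, add_mul_nonnegWalkCount_zero_left, mul_right_comm, mul_assoc]

/-- For all n ≥ 0 and 0 ≤ ℓ ≤ n, totalD(n,ℓ) = ℓ·C(2n, n-ℓ). -/
theorem totalD_eq (n ℓ : ℕ) (h : ℓ ≤ n) :
    totalD n ℓ = ℓ * Nat.choose (2 * n) (n - ℓ) := by
  rw [totalD_eq_mul_sum]
  rcases ℓ.eq_zero_or_pos with rfl | hℓ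
  · simp
  congr 1
  calc ∑ i : Fin (2 * n), nonnegWalkCount i.rev ℓ 0 * walkCount i (ℓ - 1)
    _ = ∑ i : Fin (2 * n), nonnegWalkCount i ℓ 0 * walkCount i.rev (ℓ - 1) := by
        rw [← Equiv.sum_comp Fin.revPerm]
        simp only [Fin.revPerm_apply, Fin.rev_rev]
    _ = walkCount (2 * n) (ℓ + (ℓ - 1) + 1) :=
        sum_nonnegWalkCount_mul_walkCount _ (by omega) (by omega)
    _ = walkCount (2 * n) ((2 * n : ℕ) - 2 * (n - ℓ : ℕ)) := by
        congr 1
        push_cast [h]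
        ring
    _ = (2 * n).choose (n - ℓ) := walkCount_sub_two_mul _ _
end

section
/- For every n ≥ 1 there exists a unique real threshold λ_n ∈ (0,n) such that totalB(n,ℓ) ≤ totalD(n,ℓ) if and only if ℓ ≤ λ_n, where ℓ ranges over integers in [0,n]; i.e., the function f_n(ℓ) = totalB(n,ℓ) − totalD(n,ℓ) = (ℓ+1)·C(2n, n-ℓ-1) − C(2n, n-2ℓ-1) − 2∑_{j=ℓ+1}^{2ℓ} C(2n, n-j) is ≤ 0 for ℓ ≤ λ_n and > 0 for λ_n < ℓ < n, changing sign exactly once on (0,n). -/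
/-!
Write `a j = C(2n, n + j)`. Distributing the factors `ℓ + 1` and `2` over the sum gives
`f_n(ℓ) = ∑_{i < ℓ} (a (ℓ+1) - a (ℓ+i+1) - a (ℓ+i+2))`. Divided by `a (ℓ+1)`, the summands become
`1 - a (ℓ+i+1) / a (ℓ+1) - a (ℓ+i+2) / a (ℓ+1)`: they increase with `i` because `a` decreases, and
with `ℓ` because `a` is log-concave. If the sum over `i < ℓ` is positive, then its largest summand
is positive, hence so is the next one, `i = ℓ`; passing from `ℓ` to `ℓ + 1` therefore adds a
positive summand and does not decrease the others. So once `f_n` is positive, it stays positive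
below `n`.
-/

/-- Binomial coefficient with an integer lower index: zero when the lower index is
negative. -/
def chZ (N : ℕ) (k : ℤ) : ℤ := if 0 ≤ k then (N.choose k.toNat : ℤ) else 0

/-- f_n(ℓ) = totalB(n,ℓ) − totalD(n,ℓ)
  = (ℓ+1)·C(2n, n−ℓ−1) − C(2n, n−2ℓ−1) − 2·∑_{j=ℓ+1}^{2ℓ} C(2n, n−j). -/
def fdiff (n ℓ : ℕ) : ℤ :=
  (ℓ + 1 : ℤ) * chZ (2 * n) ((n : ℤ) - ℓ - 1) - chZ (2 * n) ((n : ℤ) - 2 * ℓ - 1)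
    - 2 * ∑ j ∈ Finset.Icc (ℓ + 1) (2 * ℓ), chZ (2 * n) ((n : ℤ) - j)

/-- Log-concavity of a sequence, in the product form of "the ratio `a (k + 1) / a k` is antitone".
For sequences with zeros this is stronger than `a j * a (j + 2) ≤ a (j + 1) ^ 2`. -/
def IsLogConcave {R : Type*} [Mul R] [LE R] (a : ℕ → R) : Prop :=
  ∀ ⦃j k : ℕ⦄, j ≤ k → a (k + 1) * a j ≤ a k * a (j + 1)

theorem choose_isLogConcave (N : ℕ) : IsLogConcave N.choose := by
  intro j k hjk
  have hpos : 0 < (k + 1) * (j + 1) := by positivity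
  refine Nat.le_of_mul_le_mul_right ?_ hpos
  calc N.choose (k + 1) * N.choose j * ((k + 1) * (j + 1))
      = N.choose (k + 1) * (k + 1) * (N.choose j * (j + 1)) := by ring
    _ = N.choose k * N.choose j * ((N - k) * (j + 1)) := by rw [Nat.choose_succ_right_eq]; ring
    _ ≤ N.choose k * N.choose j * ((N - j) * (k + 1)) := by gcongr
    _ = N.choose k * (k + 1) * (N.choose j * (N - j)) := by ring
    _ = N.choose k * N.choose (j + 1) * ((k + 1) * (j + 1)) := by
      rw [← Nat.choose_succ_right_eq]; ring

theorem choose_add_antitone {N n : ℕ} (h : N ≤ 2 * n + 1) :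
    Antitone fun j ↦ N.choose (n + j) := by
  refine antitone_nat_of_succ_le fun j ↦ ?_
  refine Nat.le_of_mul_le_mul_right ?_ (Nat.succ_pos (n + j))
  calc N.choose (n + j + 1) * (n + j + 1)
      = N.choose (n + j) * (N - (n + j)) := Nat.choose_succ_right_eq N (n + j)
    _ ≤ N.choose (n + j) * (n + j + 1) := Nat.mul_le_mul_left _ (by omega)

theorem chZ_natCast_sub (N k : ℕ) : chZ N (N - k) = N.choose k := by
  unfold chZ
  split_ifs with h
  · have hk : k ≤ N := by omega
    rw [← Nat.cast_sub hk, Int.toNat_natCast, Nat.choose_symm hk]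
  · rw [Nat.choose_eq_zero_of_lt (by omega), Nat.cast_zero]

theorem pos_of_sum_range_pos {M : Type*} [AddCommMonoid M] [LinearOrder M] [IsOrderedAddMonoid M]
    {f : ℕ → M} (hf : Monotone f) {l : ℕ} (h : 0 < ∑ i ∈ Finset.range l, f i) : 0 < f l := by
  contrapose! h
  exact Finset.sum_nonpos fun i hi ↦ (hf (Finset.mem_range.mp hi).le).trans h

section Excess

variable {R : Type*} [CommRing R]

/-- The `i`-th summand of `excess a l`: the amount by which `a (l + 1)` exceeds the sum of the
consecutive terms `a (l + i + 1)` and `a (l + i + 2)`. -/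
def excessTerm (a : ℕ → R) (l i : ℕ) : R :=
  a (l + 1) - a (l + i + 1) - a (l + i + 2)

/-- The difference `totalB - totalD` at level `l`, for an arbitrary sequence `a` in place of the
binomial coefficients `C(2n, n + j)`; see `fdiff_eq_excess`. -/
def excess (a : ℕ → R) (l : ℕ) : R :=
  ∑ i ∈ Finset.range l, excessTerm a l i

theorem excess_eq (a : ℕ → R) (l : ℕ) :
    excess a l = (l + 1) * a (l + 1) - a (2 * l + 1)
      - 2 * ∑ j ∈ Finset.Icc (l + 1) (2 * l), a j := by
  have hIcc : ∑ j ∈ Finset.Icc (l + 1) (2 * l), a j = ∑ i ∈ Finset.range l, a (l + i + 1) := by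
    rw [← Finset.Ico_add_one_right_eq_Icc, Finset.sum_Ico_eq_sum_range,
      show 2 * l + 1 - (l + 1) = l by omega]
    simp only [Nat.add_right_comm]
  have hshift : ∑ i ∈ Finset.range l, a (l + i + 2)
      = ∑ i ∈ Finset.range l, a (l + i + 1) + a (2 * l + 1) - a (l + 1) := by
    rw [two_mul, ← Finset.sum_range_succ (fun i ↦ a (l + i + 1)), Finset.sum_range_succ']
    exact (add_sub_cancel_right _ _).symm
  simp only [excess, excessTerm, Finset.sum_sub_distrib, Finset.sum_const, Finset.card_range,
    nsmul_eq_mul, hIcc, hshift]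
  ring

variable [LinearOrder R] [IsStrictOrderedRing R] {a : ℕ → R}

theorem excessTerm_monotone (ha : Antitone a) (l : ℕ) : Monotone (excessTerm a l) := by
  intro i j hij
  unfold excessTerm
  gcongr <;> exact ha (by omega)

theorem mul_excessTerm_le (hlc : IsLogConcave a) (l i : ℕ) :
    a (l + 2) * excessTerm a l i ≤ a (l + 1) * excessTerm a (l + 1) i := by
  have h₁ : a (l + i + 2) * a (l + 1) ≤ a (l + i + 1) * a (l + 2) := hlc (by omega)
  have h₂ : a (l + i + 3) * a (l + 1) ≤ a (l + i + 2) * a (l + 2) := hlc (by omega)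
  simp only [excessTerm, Nat.add_right_comm l 1 i]
  linarith

theorem excess_succ_pos (ha : Antitone a) (hlc : IsLogConcave a) {l : ℕ} (hl : 0 < a (l + 2))
    (h : 0 < excess a l) : 0 < excess a (l + 1) := by
  have hl' : 0 < a (l + 1) := hl.trans_le (ha (Nat.le_succ _))
  have hnext : 0 < excessTerm a l l := pos_of_sum_range_pos (excessTerm_monotone ha l) h
  refine pos_of_mul_pos_right ?_ hl'.le
  calc 0 < a (l + 2) * (excess a l + excessTerm a l l) := by positivity
    _ = ∑ i ∈ Finset.range (l + 1), a (l + 2) * excessTerm a l i := by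
      rw [excess, ← Finset.sum_range_succ, Finset.mul_sum]
    _ ≤ ∑ i ∈ Finset.range (l + 1), a (l + 1) * excessTerm a (l + 1) i :=
      Finset.sum_le_sum fun i _ ↦ mul_excessTerm_le hlc l i
    _ = a (l + 1) * excess a (l + 1) := by rw [excess, Finset.mul_sum]

theorem excess_pos_of_le (ha : Antitone a) (hlc : IsLogConcave a) {l k : ℕ} (hlk : l ≤ k)
    (hk : 0 < a (k + 1)) (h : 0 < excess a l) : 0 < excess a k := by
  induction k, hlk using Nat.le_induction with
  | base => exact h
  | succ k _ ih => exact excess_succ_pos ha hlc hk (ih (hk.trans_le (ha (Nat.le_succ _))))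

end Excess

theorem fdiff_eq_excess (n l : ℕ) :
    fdiff n l = excess (fun j ↦ ((2 * n).choose (n + j) : ℤ)) l := by
  have hchZ (j : ℕ) : chZ (2 * n) (n - j) = (2 * n).choose (n + j) := by
    rw [← chZ_natCast_sub]
    congr 1
    push_cast
    ring
  simp only [excess_eq, fdiff, ← hchZ]
  push_cast
  simp only [sub_sub]

theorem fdiff_zero (n : ℕ) : fdiff n 0 = 0 := by
  simp [fdiff_eq_excess, excess]

theorem fdiff_pos_of_le {n l k : ℕ} (hlk : l ≤ k) (hk : k < n) (h : 0 < fdiff n l) :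
    0 < fdiff n k := by
  have hanti : Antitone fun j ↦ ((2 * n).choose (n + j) : ℤ) :=
    Nat.mono_cast.comp_antitone (choose_add_antitone (Nat.le_succ (2 * n)))
  have hlc : IsLogConcave fun j ↦ ((2 * n).choose (n + j) : ℤ) := by
    intro i j hij
    beta_reduce
    exact_mod_cast choose_isLogConcave (2 * n) (Nat.add_le_add_left hij n)
  have hpos : (0 : ℤ) < (2 * n).choose (n + (k + 1)) := mod_cast Nat.choose_pos (by omega)
  rw [fdiff_eq_excess] at h ⊢
  exact excess_pos_of_le hanti hlc hlk hpos h

theorem exists_lt_forall_lt_iff_le {p : ℕ → Prop} {n : ℕ} (hn : 0 < n) (h₀ : p 0)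
    (hp : ∀ ⦃l k : ℕ⦄, l ≤ k → k < n → p k → p l) : ∃ m < n, ∀ l < n, p l ↔ l ≤ m := by
  classical
  have hlt : Nat.findGreatest p (n - 1) < n := (Nat.findGreatest_le _).trans_lt (by omega)
  refine ⟨Nat.findGreatest p (n - 1), hlt, fun l hl ↦ ⟨Nat.le_findGreatest (by omega), ?_⟩⟩
  exact fun h ↦ hp h hlt (Nat.findGreatest_spec (Nat.zero_le _) h₀)

theorem natCast_le_add_half_iff {K : Type*} [Field K] [LinearOrder K] [IsStrictOrderedRing K]
    {l m : ℕ} : (l : K) ≤ m + 1 / 2 ↔ l ≤ m := by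
  constructor <;> intro h
  · by_contra! hml
    have : (m + 1 : K) ≤ l := mod_cast hml
    linarith
  · have : (l : K) ≤ m := mod_cast h
    linarith

/-- For every n ≥ 1 there is a threshold λ_n ∈ (0,n) such that, for integer levels
ℓ ∈ [0,n), totalB(n,ℓ) ≤ totalD(n,ℓ) iff ℓ ≤ λ_n; i.e. f_n is ≤ 0 for ℓ ≤ λ_n and
> 0 for λ_n < ℓ < n, and the sign change on (0,n) is unique. -/
theorem threshold_exists_unique (n : ℕ) (hn : 1 ≤ n) :
    (∃ lam : ℝ, 0 < lam ∧ lam < n ∧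
      ∀ ℓ : ℕ, ℓ < n → (fdiff n ℓ ≤ 0 ↔ (ℓ : ℝ) ≤ lam)) ∧
    (∃! m : ℕ, m < n ∧ (∀ ℓ : ℕ, ℓ ≤ m → fdiff n ℓ ≤ 0) ∧
      ∀ ℓ : ℕ, m < ℓ → ℓ < n → 0 < fdiff n ℓ) := by
  obtain ⟨m, hmn, hm⟩ : ∃ m < n, ∀ ℓ < n, fdiff n ℓ ≤ 0 ↔ ℓ ≤ m :=
    exists_lt_forall_lt_iff_le hn (fdiff_zero n).le fun l k hlk hk h ↦
      not_lt.mp fun hl ↦ h.not_gt (fdiff_pos_of_le hlk hk hl)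
  refine ⟨⟨m + 1 / 2, by positivity, ?_, ?_⟩, m, ⟨hmn, ?_, ?_⟩, ?_⟩
  · have : (m + 1 : ℝ) ≤ n := mod_cast hmn
    linarith
  · exact fun ℓ hℓ ↦ (hm ℓ hℓ).trans natCast_le_add_half_iff.symm
  · exact fun ℓ hℓ ↦ (hm ℓ (hℓ.trans_lt hmn)).mpr hℓ
  · exact fun ℓ hmℓ hℓ ↦ not_le.mp fun h ↦ hmℓ.not_ge ((hm ℓ hℓ).mp h)
  · rintro k ⟨hkn, hle, hpos⟩
    refine le_antisymm ((hm k hkn).mp (hle k le_rfl)) (not_lt.mp fun hkm ↦ ?_)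
    exact (hpos m hkm hmn).not_ge ((hm m hmn).mpr le_rfl)
end

section
/- The two closed forms for totalB agree: for all n ≥ 0 and 0 ≤ ℓ ≤ n, (n(2ℓ+1)/(n+ℓ+1))·C(2n, n-ℓ) − C(2n, n-2ℓ-1) − 2∑_{j=ℓ+1}^{2ℓ} C(2n, n-j) = ∑_{k=1}^{⌊(ℓ+1)/2⌋} (−1)^{k−1} k·C(ℓ−k+1,k)·((3ℓ+1)/(n−k+2ℓ+2))·C(2n−2k+ℓ+2, n−ℓ−k+1) − ∑_{k=1}^{⌊ℓ/2⌋} (−1)^{k−1} k·C(ℓ−k,k)·((3ℓ+2)/(n−k+2ℓ+2))·C(2n−2k+ℓ+1, n−ℓ−k). -/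
/-- Binomial coefficient with an integer lower index: zero when the lower index is
negative. -/
def ch (N : ℕ) (k : ℤ) : ℚ := if 0 ≤ k then (N.choose k.toNat : ℚ) else 0

/-!
Everything is read off as a coefficient of `X ^ n`. By the ballot identity, each factor
`(3ℓ + 1) / (n + 2ℓ + 2 - k)` or `(3ℓ + 2) / (n + 2ℓ + 2 - k)` turns the binomial coefficient next
to it into a difference of two neighbours, that is, into multiplication by `1 - X`. What remains of
the sums over `k` is, up to sign, the derivative `∂U/∂z` of the Lucas polynomials
`U_l(s, z) = ∑ (-1)^k C(l - k, k) z^k s^(l - 2k)` at `s = 1 + X`, `z = X`. There the characteristic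
polynomial `y² - s y + z` splits as `(y - 1) (y - X)`, so `U_l` is a geometric sum, and
differentiating the recurrence in `z` gives
`(1 - X) (X ∂U_l - ∂U_{l+1}) = l - X - X² - ⋯ - X^l`.
-/

open Polynomial

section IntegerLowerIndex

lemma ch_of_neg (N : ℕ) {m : ℤ} (hm : m < 0) : ch N m = 0 := if_neg hm.not_ge

lemma ch_natCast (N p : ℕ) : ch N p = N.choose p := by simp [ch]

lemma ch_natCast_sub_natCast (N : ℕ) {a n : ℕ} (h : a ≤ n) :
    ch N ((n : ℤ) - a) = N.choose (n - a) := by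
  rw [← Nat.cast_sub h, ch_natCast]

lemma ch_succ_succ (N : ℕ) (m : ℤ) : ch (N + 1) (m + 1) = ch N m + ch N (m + 1) := by
  obtain hm | rfl | hm : m + 1 < 0 ∨ m = -1 ∨ 0 ≤ m := by omega
  · rw [ch_of_neg _ hm, ch_of_neg _ hm, ch_of_neg _ (by omega), add_zero]
  · simp [ch]
  · lift m to ℕ using hm
    simp only [← Nat.cast_succ, ch_natCast, Nat.choose_succ_succ, Nat.cast_add]

lemma ch_succ_right_eq (N : ℕ) (m : ℤ) : ch N (m + 1) * (m + 1) = ch N m * (N - m) := by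
  obtain hm | rfl | hm : m + 1 < 0 ∨ m = -1 ∨ 0 ≤ m := by omega
  · rw [ch_of_neg _ hm, ch_of_neg _ (by omega), zero_mul, zero_mul]
  · simp [ch]
  · lift m to ℕ using hm
    simp only [← Nat.cast_succ, ch_natCast, Int.cast_natCast]
    rcases le_or_gt m N with hmN | hNm
    · rw [← Nat.cast_sub hmN]
      exact_mod_cast Nat.choose_succ_right_eq N m
    · rw [Nat.choose_eq_zero_of_lt hNm, Nat.choose_eq_zero_of_lt (hNm.trans m.lt_succ_self),
        Nat.cast_zero, zero_mul, zero_mul]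

lemma ballot_mul_ch {N : ℕ} {m : ℤ} (h : (N : ℚ) - m ≠ 0) :
    (N - 2 * m - 1) / (N - m) * ch N (m + 1) = ch N (m + 1) - ch N m := by
  rw [div_mul_eq_mul_div, div_eq_iff h]
  linear_combination -ch_succ_right_eq N m

lemma coeff_X_pow_mul_one_add_X_pow (N a n : ℕ) :
    ((X : ℚ[X]) ^ a * (1 + X) ^ N).coeff n = ch N ((n : ℤ) - a) := by
  rw [coeff_X_pow_mul']
  split_ifs with h
  · rw [coeff_one_add_X_pow, ch_natCast_sub_natCast N h]
  · rw [ch_of_neg _ (by omega)]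

lemma coeff_one_sub_X_mul_X_pow_mul_one_add_X_pow (N a n : ℕ) :
    ((1 - X) * ((X : ℚ[X]) ^ a * (1 + X) ^ N)).coeff n =
      ch N ((n : ℤ) - a) - ch N ((n : ℤ) - a - 1) := by
  have expand : (1 - X) * ((X : ℚ[X]) ^ a * (1 + X) ^ N) =
      X ^ a * (1 + X) ^ N - X ^ (a + 1) * (1 + X) ^ N := by ring
  rw [expand, coeff_sub, coeff_X_pow_mul_one_add_X_pow, coeff_X_pow_mul_one_add_X_pow,
    Nat.cast_succ, sub_add_eq_sub_sub]

end IntegerLowerIndex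

section Lucas

variable {R : Type*} [CommRing R]

/-- The Lucas polynomial (of the first kind) `U_l(s, z)` with parameters `s` and `z`, indexed so
that `U_0 = 1`. It is a polynomial in `z`, because the argument differentiates with respect to
`z`. -/
noncomputable def lucasU (s : R) : ℕ → R[X]
  | 0 => 1
  | 1 => C s
  | l + 2 => C s * lucasU s (l + 1) - X * lucasU s l

lemma coeff_lucasU (s : R) (l k : ℕ) :
    (lucasU s l).coeff k = (-1) ^ k * (l - k).choose k * s ^ (l - 2 * k) := by
  induction l using Nat.twoStepInduction generalizing k with
  | zero => cases k <;> simp [lucasU, coeff_one]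
  | one => rcases k with _ | _ | k <;> simp [lucasU, coeff_C]
  | more l ih₀ ih₁ =>
    rw [lucasU, coeff_sub, coeff_C_mul, ih₁]
    rcases k with _ | k
    · simp [pow_succ']
    rw [coeff_X_mul, ih₀]
    rcases lt_or_ge l (2 * k) with h | h
    · rw [Nat.choose_eq_zero_of_lt (show l + 2 - (k + 1) < k + 1 by omega),
        Nat.choose_eq_zero_of_lt (show l + 1 - (k + 1) < k + 1 by omega),
        Nat.choose_eq_zero_of_lt (show l - k < k by omega)]
      simp
    obtain ⟨d, rfl⟩ := Nat.exists_eq_add_of_le h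
    rw [show 2 * k + d + 2 - (k + 1) = k + d + 1 by omega,
      show 2 * k + d + 2 - 2 * (k + 1) = d by omega,
      show 2 * k + d + 1 - (k + 1) = k + d by omega,
      show 2 * k + d + 1 - 2 * (k + 1) = d - 1 by omega,
      show 2 * k + d - k = k + d by omega, show 2 * k + d - 2 * k = d by omega,
      Nat.choose_succ_succ]
    rcases d with _ | d
    · simp [pow_succ]
    · rw [Nat.add_sub_cancel]
      push_cast
      ring

lemma natDegree_lucasU_le (s : R) (l : ℕ) : (lucasU s l).natDegree ≤ l / 2 := by
  refine natDegree_le_iff_coeff_eq_zero.mpr fun k hk => ?_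
  simp [coeff_lucasU, Nat.choose_eq_zero_of_lt (show l - k < k by omega)]

lemma eval_derivative_lucasU (s z : R) (l : ℕ) :
    (derivative (lucasU s l)).eval z = ∑ k ∈ Finset.Icc 1 (l / 2),
      (-1) ^ k * (l - k).choose k * s ^ (l - 2 * k) * k * z ^ (k - 1) := by
  rw [derivative_eval, sum_over_range' _ (by simp) _ (Nat.lt_succ_of_le (natDegree_lucasU_le s l)),
    Finset.range_eq_Ico, Finset.sum_eq_sum_Ico_succ_bot (Nat.succ_pos _)]
  simp [coeff_lucasU, Finset.Ico_add_one_right_eq_Icc]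

lemma one_sub_mul_eval_lucasU (t : R) (l : ℕ) :
    (1 - t) * (lucasU (1 + t) l).eval t = 1 - t ^ (l + 1) := by
  induction l using Nat.twoStepInduction with
  | zero => simp [lucasU]
  | one => simp only [lucasU, eval_C]; ring
  | more l ih₀ ih₁ =>
    simp only [lucasU, eval_sub, eval_mul, eval_C, eval_X]
    linear_combination (1 + t) * ih₁ - t * ih₀

lemma eval_derivative_lucasU_add_two (s z : R) (l : ℕ) :
    (derivative (lucasU s (l + 2))).eval z = s * (derivative (lucasU s (l + 1))).eval z
      - (lucasU s l).eval z - z * (derivative (lucasU s l)).eval z := by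
  simp only [lucasU, derivative_sub, derivative_mul, derivative_C, derivative_X, eval_sub,
    eval_add, eval_mul, eval_C, eval_X, eval_zero, eval_one]
  ring

lemma one_sub_mul_eval_derivative_lucasU (t : R) (l : ℕ) :
    (1 - t) * (t * (derivative (lucasU (1 + t) l)).eval t
      - (derivative (lucasU (1 + t) (l + 1))).eval t) = l - ∑ j ∈ Finset.Icc 1 l, t ^ j := by
  induction l with
  | zero => simp [lucasU]
  | succ l ih =>
    rw [Finset.sum_Icc_succ_top (Nat.le_add_left 1 l), eval_derivative_lucasU_add_two,
      Nat.cast_succ]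
    linear_combination ih + one_sub_mul_eval_lucasU t l

end Lucas

/-- The alternating sum of weighted ballot numbers common to both sums over `k` of the closed form:
they are the cases `(L, a) = (ℓ + 1, ℓ)` and `(L, a) = (ℓ, ℓ + 1)`. -/
def ballotSum (n L a : ℕ) : ℚ :=
  ∑ k ∈ Finset.Icc 1 (L / 2), (-1 : ℚ) ^ (k - 1) * k * (L - k).choose k *
    ((L + 2 * a) / (n + 1 + L + a - k)) * ch (2 * n + 1 + L - 2 * k) ((n : ℤ) - a - k + 1)

lemma ballot_mul_ch_eq_coeff (n a : ℕ) {L k : ℕ} (hk : 1 ≤ k) (hkL : 2 * k ≤ L) :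
    ((L + 2 * a) / (n + 1 + L + a - k) : ℚ) * ch (2 * n + 1 + L - 2 * k) ((n : ℤ) - a - k + 1) =
      ((1 - X) * ((X : ℚ[X]) ^ (a + (k - 1)) * (1 + X) ^ (2 * n + 1 + L - 2 * k))).coeff n := by
  have hN : ((2 * n + 1 + L - 2 * k : ℕ) : ℚ) = 2 * n + 1 + L - 2 * k := by
    rw [Nat.cast_sub (by omega)]
    push_cast
    ring
  have hpos : (0 : ℚ) < n + 1 + L + a - k := by
    have : (k : ℚ) ≤ L := by exact_mod_cast (by omega : k ≤ L)
    linarith [n.cast_nonneg (α := ℚ), a.cast_nonneg (α := ℚ)]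
  have hden : ((2 * n + 1 + L - 2 * k : ℕ) : ℚ) - ((n : ℤ) - a - k : ℤ) = n + 1 + L + a - k := by
    rw [hN]
    push_cast
    ring
  have hnum : ((2 * n + 1 + L - 2 * k : ℕ) : ℚ) - 2 * ((n : ℤ) - a - k : ℤ) - 1 = L + 2 * a := by
    rw [hN]
    push_cast
    ring
  have ballot := ballot_mul_ch (hden ▸ hpos.ne')
  rw [hnum, hden] at ballot
  rw [ballot, coeff_one_sub_X_mul_X_pow_mul_one_add_X_pow]
  congr 2 <;> omega

lemma ballotSum_eq_coeff (n L a : ℕ) :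
    ballotSum n L a = -((1 - X) * (X ^ a * (1 + X) ^ (2 * n + 1)) *
      (derivative (lucasU (1 + X : ℚ[X]) L)).eval X).coeff n := by
  rw [eval_derivative_lucasU, Finset.mul_sum, finsetSum_coeff, ← Finset.sum_neg_distrib, ballotSum]
  refine Finset.sum_congr rfl fun k hk => ?_
  obtain ⟨hk, hkL⟩ := Finset.mem_Icc.mp hk
  have hkL : 2 * k ≤ L := by omega
  rw [mul_assoc, ballot_mul_ch_eq_coeff n a hk hkL, ← coeff_C_mul, ← coeff_neg,
    Nat.add_sub_assoc hkL]
  obtain ⟨p, rfl⟩ := Nat.exists_eq_add_of_le' hk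
  congr 1
  simp only [map_mul, map_pow, map_neg, map_one, map_natCast, Nat.add_sub_cancel]
  ring

lemma ballotSum_sub_ballotSum (n l : ℕ) :
    ballotSum n (l + 1) l - ballotSum n l (l + 1) =
      l * ch (2 * n + 1) ((n : ℤ) - l)
        - ∑ j ∈ Finset.Icc (l + 1) (2 * l), ch (2 * n + 1) ((n : ℤ) - j) := by
  have shift : ∑ j ∈ Finset.Icc (l + 1) (2 * l), (X : ℚ[X]) ^ j * (1 + X) ^ (2 * n + 1) =
      X ^ l * (1 + X) ^ (2 * n + 1) * ∑ j ∈ Finset.Icc 1 l, X ^ j := by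
    rw [Finset.mul_sum, two_mul, add_comm l 1, ← Finset.map_add_right_Icc, Finset.sum_map]
    exact Finset.sum_congr rfl fun j _ => by simp only [addRightEmbedding_apply]; ring
  simp only [← coeff_X_pow_mul_one_add_X_pow, ballotSum_eq_coeff]
  rw [← coeff_C_mul, ← finsetSum_coeff, shift, ← coeff_neg, ← coeff_neg, ← coeff_sub, ← coeff_sub,
    map_natCast]
  congr 1
  linear_combination
    X ^ l * (1 + X) ^ (2 * n + 1) * one_sub_mul_eval_derivative_lucasU (X : ℚ[X]) l

lemma mul_div_mul_ch_eq (n l : ℕ) :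
    (n * (2 * l + 1) / (n + l + 1) : ℚ) * ch (2 * n) ((n : ℤ) - l) =
      l * ch (2 * n + 1) ((n : ℤ) - l) + ch (2 * n) ((n : ℤ) - l - 1) := by
  have pascal := ch_succ_succ (2 * n) ((n : ℤ) - l - 1)
  have absorb := ch_succ_right_eq (2 * n) ((n : ℤ) - l - 1)
  rw [sub_add_cancel] at pascal absorb
  push_cast at absorb
  rw [pascal, div_mul_eq_mul_div, div_eq_iff (by positivity)]
  linear_combination (l + 1) * absorb

lemma sum_Icc_ch_succ (N : ℕ) (m : ℤ) (l : ℕ) :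
    ∑ j ∈ Finset.Icc (l + 1) (2 * l), ch (N + 1) (m - j) =
      2 * ∑ j ∈ Finset.Icc (l + 1) (2 * l), ch N (m - j)
        + ch N (m - 2 * l - 1) - ch N (m - l - 1) := by
  have pascal (j : ℕ) : ch (N + 1) (m - j) =
      2 * ch N (m - j) + (ch N (m - (j + 1 : ℕ)) - ch N (m - j)) := by
    have := ch_succ_succ N (m - (j + 1 : ℕ))
    rw [show m - (j + 1 : ℕ) + 1 = m - j by push_cast; ring] at this
    linear_combination this
  have telescope := Finset.sum_Ico_sub (fun j : ℕ => ch N (m - j))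
    (show l + 1 ≤ 2 * l + 1 by omega)
  rw [← Finset.Ico_add_one_right_eq_Icc, Finset.sum_congr rfl fun j _ => pascal j,
    Finset.sum_add_distrib, ← Finset.mul_sum, telescope]
  push_cast
  simp only [sub_add_eq_sub_sub]
  ring

/-- The two closed forms for totalB agree: for all n ≥ 0 and 0 ≤ ℓ ≤ n,
(n(2ℓ+1)/(n+ℓ+1))·C(2n, n−ℓ) − C(2n, n−2ℓ−1) − 2∑_{j=ℓ+1}^{2ℓ} C(2n, n−j)
 = ∑_{k=1}^{⌊(ℓ+1)/2⌋} (−1)^{k−1} k·C(ℓ−k+1,k)·((3ℓ+1)/(n−k+2ℓ+2))·C(2n−2k+ℓ+2, n−ℓ−k+1)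
 − ∑_{k=1}^{⌊ℓ/2⌋} (−1)^{k−1} k·C(ℓ−k,k)·((3ℓ+2)/(n−k+2ℓ+2))·C(2n−2k+ℓ+1, n−ℓ−k). -/
theorem totalB_closed_forms_agree (n ℓ : ℕ) (h : ℓ ≤ n) :
    ((n : ℚ) * (2 * ℓ + 1) / (n + ℓ + 1)) * Nat.choose (2 * n) (n - ℓ)
        - ch (2 * n) ((n : ℤ) - 2 * ℓ - 1)
        - 2 * ∑ j ∈ Finset.Icc (ℓ + 1) (2 * ℓ), ch (2 * n) ((n : ℤ) - j) =
      (∑ k ∈ Finset.Icc 1 ((ℓ + 1) / 2),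
        (-1 : ℚ) ^ (k - 1) * k * Nat.choose (ℓ - k + 1) k *
          ((3 * ℓ + 1 : ℚ) / (n + 2 * ℓ + 2 - k)) *
          ch (2 * n + ℓ + 2 - 2 * k) ((n : ℤ) - ℓ - k + 1))
      - ∑ k ∈ Finset.Icc 1 (ℓ / 2),
        (-1 : ℚ) ^ (k - 1) * k * Nat.choose (ℓ - k) k *
          ((3 * ℓ + 2 : ℚ) / (n + 2 * ℓ + 2 - k)) *
          ch (2 * n + ℓ + 1 - 2 * k) ((n : ℤ) - ℓ - k) := by
  have h_ballot := ballotSum_sub_ballotSum n ℓ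
  have h_lead := mul_div_mul_ch_eq n ℓ
  have h_sum := sum_Icc_ch_succ (2 * n) n ℓ
  rw [ch_natCast_sub_natCast _ h] at h_lead
  rw [h_lead]
  trans ballotSum n (ℓ + 1) ℓ - ballotSum n ℓ (ℓ + 1)
  · linear_combination h_sum - h_ballot
  · unfold ballotSum
    congr 1 <;> refine Finset.sum_congr rfl fun k hk => ?_
    · rw [Finset.mem_Icc] at hk
      rw [show ℓ + 1 - k = ℓ - k + 1 by omega,
        show 2 * n + 1 + (ℓ + 1) - 2 * k = 2 * n + ℓ + 2 - 2 * k by omega]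
      push_cast
      ring_nf
    · rw [show 2 * n + 1 + ℓ - 2 * k = 2 * n + ℓ + 1 - 2 * k by omega,
        show (n : ℤ) - (ℓ + 1 : ℕ) - k + 1 = n - ℓ - k by push_cast; ring]
      push_cast
      ring_nf
end

section
/- Let C(z) satisfy C = 1 + zC², and define f_n(z) = ∑_{k=0}^{⌊n/2⌋} C(n-k,k) z^k. Then for all ℓ ≥ 1, the generating function B_ℓ(z) = ∑_n totalB(n,ℓ) z^n satisfies B_ℓ(z) = z^ℓ · C^{3ℓ+1} · ( zC·(d/dz)f_ℓ(−z) − (d/dz)f_{ℓ+1}(−z) ). -/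
open scoped Classical

open Polynomial

/-- The Fibonacci polynomial `f_m(z) = ∑_{k=0}^{⌊m/2⌋} C(m-k,k) z^k` for `m ≥ 0`,
and `f_m = 0` for `m < 0`. -/
noncomputable def fibP (m : ℤ) : Polynomial ℚ :=
  if m < 0 then 0
  else ∑ k ∈ Finset.range (m.toNat / 2 + 1),
    Polynomial.C ((Nat.choose (m.toNat - k) k : ℚ)) * Polynomial.X ^ k

/-- The polynomial `f_m(−z)`. -/
noncomputable def fibPneg (m : ℤ) : Polynomial ℚ := (fibP m).comp (-Polynomial.X)

/-!
A node with bfs score `b` is the `b`-th node (counted from `0`) when all nodes are listed by level,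
so the scores at level `ℓ` of a tree sum to a quantity depending only on the multiset of levels: if
there are `a` nodes at level `ℓ` and `s` at smaller levels, the sum is `a * s + a.choose 2`. This is
computed along the decomposition of an ordered tree into its first root subtree and the rest. With
`L_ℓ`, `S_ℓ`, `B_ℓ` the generating functions of the number of nodes at level `ℓ`, of the number of
nodes at levels less than `ℓ`, and of the score sum, the decomposition and `C = 1 + z * C ^ 2` give

* `L_{ℓ+1} = z * C ^ 2 * L_ℓ`, hence `L_ℓ = z ^ ℓ * C ^ (2 * ℓ + 1)`;
* `S_{ℓ+2} = C * S_{ℓ+1} - z * C ^ 2 * S_ℓ`, the recursion of the Fibonacci polynomials at `-z`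
  scaled by powers of `C`, hence `S_{ℓ+1} = C ^ (ℓ + 1) * f_ℓ(-z)`;
* `B_{ℓ+1} = z * C ^ 2 * B_ℓ + L_{ℓ+1} * S_{ℓ+1}`.

The closed form for `B_ℓ` solves the last recursion, because differentiating the recursion of
`f_ℓ(-z)` produces the inhomogeneous term `f_ℓ(-z)`.
-/

open scoped PowerSeries

lemma add_choose_two (m n : ℕ) : (m + n).choose 2 = m.choose 2 + n.choose 2 + m * n := by
  induction n with
  | zero => simp
  | succ n ih =>
    rw [← add_assoc, Nat.choose_succ_succ' _ 1, Nat.choose_succ_succ' n 1, ih,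
      Nat.choose_one_right, Nat.choose_one_right]
    ring

lemma countP_le_eq_countP_lt_add_count {α : Type*} [LinearOrder α] (s : Multiset α) (a : α) :
    s.countP (· ≤ a) = s.countP (· < a) + s.count a := by
  induction s using Multiset.induction_on with
  | empty => rfl
  | cons b s ih => grind [Multiset.countP_cons, Multiset.count_cons]

lemma count_map_val {ι α : Type*} [DecidableEq α] (s : Finset ι) (f : ι → α) (a : α) :
    (s.val.map f).count a = (s.filter (f · = a)).card := by
  simp only [Multiset.count_map, eq_comm, Finset.card_def, Finset.filter_val]

/-- The sum, over the entries of `s` equal to `a`, of their positions (counted from `0`) when `s`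
is listed in increasing order. For the multiset of levels of an ordered tree this is the sum of the
bfs scores over a level, since breadth-first search visits the nodes level by level. -/
def sortedPositionSum {α : Type*} [LinearOrder α] (s : Multiset α) (a : α) : ℕ :=
  s.count a * s.countP (· < a) + (s.count a).choose 2

section SortedPositionSum

variable {α β : Type*} [LinearOrder α] [LinearOrder β]

lemma sortedPositionSum_add (s t : Multiset α) (a : α) :
    sortedPositionSum (s + t) a = sortedPositionSum s a + sortedPositionSum t a +
      s.count a * t.countP (· ≤ a) + s.countP (· < a) * t.count a := by
  simp only [sortedPositionSum, Multiset.count_add, Multiset.countP_add, add_choose_two,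
    countP_le_eq_countP_lt_add_count]
  ring

lemma sortedPositionSum_map {f : α → β} (hf : StrictMono f) (s : Multiset α) (a : α) :
    sortedPositionSum (s.map f) (f a) = sortedPositionSum s a := by
  simp only [sortedPositionSum, Multiset.count_map_eq_count' f s hf.injective, Multiset.countP_map,
    hf.lt_iff_lt, ← Multiset.countP_eq_card_filter]

lemma sortedPositionSum_cons_of_lt {a b : α} (hba : b < a) (s : Multiset α) :
    sortedPositionSum (b ::ₘ s) a = s.count a + sortedPositionSum s a := by
  simp only [sortedPositionSum, Multiset.count_cons_of_ne hba.ne',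
    Multiset.countP_cons_of_pos (p := (· < a)) s hba]
  ring

lemma sum_card_filter_lt (s : Finset β) :
    ∑ i ∈ s, (s.filter (· < i)).card = s.card.choose 2 := by
  induction s using Finset.induction_on_max with
  | empty => simp
  | insert a s ha ih =>
    have ha' : a ∉ s := fun h => (ha a h).false
    have filter_max : (insert a s).filter (· < a) = s := by
      rw [Finset.filter_insert, if_neg (lt_irrefl a), Finset.filter_true_of_mem ha]
    have filter_old : ∀ i ∈ s, (insert a s).filter (· < i) = s.filter (· < i) := fun i hi => by
      rw [Finset.filter_insert, if_neg (ha i hi).asymm]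
    rw [Finset.sum_insert ha', filter_max, Finset.sum_congr rfl fun i hi => by rw [filter_old i hi],
      ih, Finset.card_insert_of_notMem ha', Nat.choose_succ_succ' _ 1, Nat.choose_one_right]

lemma sum_card_filter_lex_lt (s : Finset β) (f : β → α) (a : α) :
    ∑ i ∈ s with f i = a, (s.filter fun j => f j < a ∨ f j = a ∧ j < i).card =
      sortedPositionSum (s.val.map f) a := by
  have card_filter_lex (i : β) : (s.filter fun j => f j < a ∨ f j = a ∧ j < i).card =
      (s.filter (f · < a)).card + ((s.filter (f · = a)).filter (· < i)).card := by
    rw [Finset.filter_or, Finset.filter_filter, Finset.card_union_of_disjoint]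
    exact Finset.disjoint_filter.2 fun j _ hlt heq => hlt.ne heq.1
  have countP_eq : (s.val.map f).countP (· < a) = (s.filter (f · < a)).card :=
    Multiset.countP_map ..
  simp only [card_filter_lex, Finset.sum_add_distrib, Finset.sum_const, smul_eq_mul,
    sum_card_filter_lt, sortedPositionSum, count_map_val, countP_eq]

end SortedPositionSum

section LatticePaths

open DyckStep

/-- The letters of the words in `IsDyck`, read as Mathlib's Dyck steps. -/
def boolEquivDyckStep : Bool ≃ DyckStep where
  toFun b := bif b then U else D
  invFun s := decide (s = U)
  left_inv b := by cases b <;> rfl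
  right_inv s := by cases s <;> rfl

/-- The word `w` as a list of Dyck steps. -/
def stepList {n : ℕ} (w : Fin n → Bool) : List DyckStep :=
  List.ofFn (boolEquivDyckStep ∘ w)

/-- The final height of the lattice path `L`. -/
def rise (L : List DyckStep) : ℤ :=
  L.count U - L.count D

/-- The heights reached by the up-steps of the lattice path `L`. -/
def upHeights : List DyckStep → Multiset ℤ
  | [] => 0
  | U :: L => 1 ::ₘ (upHeights L).map (1 + ·)
  | D :: L => (upHeights L).map (-1 + ·)

lemma rise_U_cons (L : List DyckStep) : rise (U :: L) = 1 + rise L := by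
  rw [rise, rise, List.count_cons_self, List.count_cons_of_ne (by decide), Nat.cast_succ]
  ring

lemma rise_D_cons (L : List DyckStep) : rise (D :: L) = -1 + rise L := by
  rw [rise, rise, List.count_cons_self, List.count_cons_of_ne (by decide), Nat.cast_succ]
  ring

lemma upHeights_append (L M : List DyckStep) :
    upHeights (L ++ M) = upHeights L + (upHeights M).map (rise L + ·) := by
  induction L with
  | nil => simp [upHeights, rise]
  | cons s L ih =>
    cases s <;>
      simp [upHeights, ih, rise_U_cons, rise_D_cons, Multiset.map_map, add_assoc]

lemma count_U_add_count_D (L : List DyckStep) : L.count U + L.count D = L.length := by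
  induction L with
  | nil => rfl
  | cons s L ih => cases s <;> grind

lemma length_stepList {n : ℕ} (w : Fin n → Bool) : (stepList w).length = n :=
  List.length_ofFn

lemma stepList_cons {n : ℕ} (b : Bool) (w : Fin n → Bool) :
    stepList (Fin.cons b w : Fin (n + 1) → Bool) = boolEquivDyckStep b :: stepList w := by
  simp [stepList, List.ofFn_succ, Function.comp_def]

lemma stepList_injective {n : ℕ} : Function.Injective (stepList (n := n)) :=
  List.ofFn_injective.comp boolEquivDyckStep.injective.comp_left

lemma exists_stepList_eq {n : ℕ} {L : List DyckStep} (hL : L.length = n) :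
    ∃ w : Fin n → Bool, stepList w = L := by
  subst hL
  refine ⟨boolEquivDyckStep.symm ∘ L.get, ?_⟩
  rw [stepList, ← Function.comp_assoc, Equiv.self_comp_symm, Function.id_comp, List.ofFn_get]

lemma card_filter_eq_true {n : ℕ} (w : Fin n → Bool) :
    (Finset.univ.filter (w · = true)).card = (stepList w).count U := by
  induction w using Fin.consInduction with
  | elim0 => rfl
  | cons b w ih =>
    rw [Fin.card_filter_univ_succ, stepList_cons]
    cases b <;> simp [boolEquivDyckStep, ih]

lemma heightAt_cons_succ {n : ℕ} (b : Bool) (w : Fin n → Bool) (k : ℕ) :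
    heightAt (n + 1) (Fin.cons b w) (k + 1) = (bif b then 1 else -1) + heightAt n w k := by
  simp only [heightAt, Fin.card_filter_univ_succ, Fin.val_zero, Fin.cons_zero, Fin.val_succ,
    Fin.cons_succ, Nat.add_lt_add_iff_right, Nat.succ_pos, true_and]
  cases b <;> grind

lemma heightAt_eq_rise_take {n : ℕ} (w : Fin n → Bool) (k : ℕ) :
    heightAt n w k = rise ((stepList w).take k) := by
  induction w using Fin.consInduction generalizing k with
  | elim0 => simp [heightAt, stepList, rise]
  | cons b w ih =>
    cases k with
    | zero => simp [heightAt, rise]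
    | succ k =>
      rw [heightAt_cons_succ, stepList_cons, List.take_succ_cons, ih]
      cases b
      · exact (rise_D_cons _).symm
      · exact (rise_U_cons _).symm

lemma map_heightAt_eq_upHeights {n : ℕ} (w : Fin n → Bool) :
    (Finset.univ.filter (w · = true)).val.map (fun i : Fin n => heightAt n w (i + 1)) =
      upHeights (stepList w) := by
  induction w using Fin.consInduction with
  | elim0 => rfl
  | @cons n b w ih =>
    have heightAt_zero : heightAt n w 0 = 0 := by simp [heightAt]
    simp only [stepList_cons, Fin.univ_succ, Finset.filter_cons, Finset.filter_map]
    cases b <;>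
      simp [boolEquivDyckStep, upHeights, ← ih, heightAt_cons_succ, heightAt_zero]

end LatticePaths

section DyckWords

open DyckStep BinaryTree

lemma isDyck_iff_exists_dyckWord {n : ℕ} (w : Fin (2 * n) → Bool) :
    IsDyck n w ↔ ∃ p : DyckWord, p.toList = stepList w := by
  have count_add := count_U_add_count_D (stepList w)
  rw [length_stepList] at count_add
  simp only [IsDyck, card_filter_eq_true, heightAt_eq_rise_take, rise, sub_nonneg, Nat.cast_le]
  constructor
  · rintro ⟨count_U, count_D_le_count_U⟩
    refine ⟨⟨stepList w, by omega, fun k => ?_⟩, rfl⟩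
    rcases le_total k (2 * n) with hk | hk
    · exact count_D_le_count_U k hk
    · rw [List.take_of_length_le (by rwa [length_stepList])]
      omega
  · rintro ⟨p, hp⟩
    have balanced := p.count_U_eq_count_D
    rw [hp] at balanced
    exact ⟨by omega, fun k _ => hp ▸ p.count_D_le_count_U k⟩

lemma image_stepList_dyckWords (n : ℕ) :
    (dyckWords n).image stepList =
      (treesOfNumNodesEq n).image fun t => (DyckWord.ofTree t).toList := by
  ext L
  simp only [dyckWords, Finset.mem_image, Finset.mem_filter, Finset.mem_univ, true_and,
    BinaryTree.mem_treesOfNumNodesEq, isDyck_iff_exists_dyckWord]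
  constructor
  · rintro ⟨w, ⟨p, hp⟩, rfl⟩
    have two_mul_semilength : 2 * p.semilength = 2 * n := by
      rw [p.two_mul_semilength_eq_length, hp, length_stepList]
    exact ⟨p.toTree, by rw [p.numNodes_toTree]; omega, by rw [p.ofTree_toTree, hp]⟩
  · rintro ⟨t, rfl, rfl⟩
    have length_eq : (DyckWord.ofTree t).toList.length = 2 * t.numNodes := by
      rw [← DyckWord.two_mul_semilength_eq_length, ← DyckWord.numNodes_toTree,
        DyckWord.toTree_ofTree]
    obtain ⟨w, hw⟩ := exists_stepList_eq length_eq
    exact ⟨w, ⟨_, hw.symm⟩, hw⟩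

lemma sum_dyckWords {M : Type*} [AddCommMonoid M] (n : ℕ) (F : List DyckStep → M) :
    ∑ w ∈ dyckWords n, F (stepList w) =
      ∑ t ∈ treesOfNumNodesEq n, F (DyckWord.ofTree t).toList := by
  have toList_ofTree_injective :
      Function.Injective fun t : BinaryTree Unit => (DyckWord.ofTree t).toList :=
    fun _ _ h => DyckWord.equivTree.symm.injective (DyckWord.ext h)
  rw [← Finset.sum_image stepList_injective.injOn, image_stepList_dyckWords,
    Finset.sum_image toList_ofTree_injective.injOn]

/-- The levels of the nodes, the root included, of the ordered tree encoded by a binary tree, where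
`p △ q` encodes the ordered tree obtained from that of `q` by attaching that of `p` as a new first
child of the root. -/
def nodeLevels {α : Type*} : BinaryTree α → Multiset ℕ
  | .nil => {0}
  | .node _ p q => (nodeLevels p).map (· + 1) + nodeLevels q

lemma rise_dyckWord (p : DyckWord) : rise p.toList = 0 := by
  rw [rise, p.count_U_eq_count_D, sub_self]

lemma upHeights_add (p q : DyckWord) :
    upHeights (p + q).toList = upHeights p.toList + upHeights q.toList := by
  change upHeights (p.toList ++ q.toList) = _
  simp [upHeights_append, rise_dyckWord]

lemma upHeights_nest (p : DyckWord) :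
    upHeights p.nest.toList = 1 ::ₘ (upHeights p.toList).map (1 + ·) := by
  simp [DyckWord.nest, upHeights, upHeights_append]

lemma zero_cons_upHeights_ofTree (t : BinaryTree Unit) :
    0 ::ₘ upHeights (DyckWord.ofTree t).toList = (nodeLevels t).map Nat.cast := by
  induction t with
  | nil => rfl
  | node _ p q ihp ihq =>
    calc
      0 ::ₘ upHeights ((DyckWord.ofTree p).nest + DyckWord.ofTree q).toList
      _ = (0 ::ₘ upHeights (DyckWord.ofTree p).toList).map (1 + ·) +
            0 ::ₘ upHeights (DyckWord.ofTree q).toList := by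
        simp [upHeights_add, upHeights_nest]
      _ = (nodeLevels (p △ q)).map Nat.cast := by
        simp [ihp, ihq, nodeLevels, add_comm]

lemma sum_bfsScore_nodesAtLevel {n ℓ : ℕ} (hℓ : 0 < ℓ) (w : Fin (2 * n) → Bool) :
    ∑ v ∈ nodesAtLevel n w ℓ, bfsScore n w v =
      sortedPositionSum (0 ::ₘ upHeights (stepList w)) (ℓ : ℤ) := by
  let ups := Finset.univ.filter fun i : Fin (2 * n) => w i = true
  let height (i : Fin (2 * n)) := heightAt (2 * n) w (i + 1)
  have nodesAtLevel_eq :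
      nodesAtLevel n w ℓ = (ups.filter (height · = ℓ)).map Function.Embedding.some := by
    ext v
    rw [nodesAtLevel, Finset.mem_filter_univ]
    cases v with
    | none => simpa [isNode, nodeLevel] using (Int.natCast_pos.2 hℓ).ne
    | some i => simp [isNode, nodeLevel, ups, height]
  have bfsScore_eq : ∀ i ∈ ups.filter (height · = ℓ), bfsScore n w (some i) =
      1 + (ups.filter fun j => height j < ℓ ∨ height j = ℓ ∧ j < i).card := fun i hi => by
    have height_i : heightAt (2 * n) w (i + 1) = ℓ := (Finset.mem_filter.1 hi).2
    simp only [bfsScore, nodeLevel, height_i, ups, height, Finset.filter_filter, Fin.lt_def]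
  calc
    ∑ v ∈ nodesAtLevel n w ℓ, bfsScore n w v
    _ = ∑ i ∈ ups with height i = ℓ,
          (1 + (ups.filter fun j => height j < ℓ ∨ height j = ℓ ∧ j < i).card) := by
      rw [nodesAtLevel_eq, Finset.sum_map]
      exact Finset.sum_congr rfl bfsScore_eq
    _ = (ups.filter (height · = ℓ)).card + sortedPositionSum (ups.val.map height) (ℓ : ℤ) := by
      rw [Finset.sum_add_distrib, sum_card_filter_lex_lt, Finset.card_eq_sum_ones]
    _ = sortedPositionSum (0 ::ₘ upHeights (stepList w)) (ℓ : ℤ) := by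
      rw [← map_heightAt_eq_upHeights, sortedPositionSum_cons_of_lt (by exact_mod_cast hℓ),
        count_map_val]

lemma totalB_eq_sum_trees (n : ℕ) {ℓ : ℕ} (hℓ : 0 < ℓ) :
    totalB n ℓ = ∑ t ∈ treesOfNumNodesEq n, sortedPositionSum (nodeLevels t) ℓ := by
  simp only [totalB, sum_bfsScore_nodesAtLevel hℓ]
  rw [sum_dyckWords n fun L => sortedPositionSum (0 ::ₘ upHeights L) (ℓ : ℤ)]
  refine Finset.sum_congr rfl fun t _ => ?_
  rw [zero_cons_upHeights_ofTree, sortedPositionSum_map Nat.strictMono_cast]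

end DyckWords

section TreeSeries

open BinaryTree

variable {R : Type*}

/-- The generating function, by number of nodes, of the statistic `F` on binary trees. -/
def treeSeries [Semiring R] (F : BinaryTree Unit → R) : R⟦X⟧ :=
  PowerSeries.mk fun n => ∑ t ∈ treesOfNumNodesEq n, F t

/-- The generating function, by total number of nodes, of the statistic `F` on pairs of binary
trees. -/
def treePairSeries [Semiring R] (F : BinaryTree Unit → BinaryTree Unit → R) : R⟦X⟧ :=
  PowerSeries.mk fun n => ∑ ij ∈ Finset.HasAntidiagonal.antidiagonal n,
    ∑ p ∈ treesOfNumNodesEq ij.1, ∑ q ∈ treesOfNumNodesEq ij.2, F p q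

section Semiring

variable [Semiring R]

lemma treeSeries_zero : treeSeries (fun _ => (0 : R)) = 0 := by
  ext n
  simp [treeSeries]

lemma treeSeries_add (F G : BinaryTree Unit → R) :
    treeSeries (fun t => F t + G t) = treeSeries F + treeSeries G := by
  ext n
  simp [treeSeries, Finset.sum_add_distrib]

lemma treePairSeries_add (F G : BinaryTree Unit → BinaryTree Unit → R) :
    treePairSeries (fun p q => F p q + G p q) = treePairSeries F + treePairSeries G := by
  ext n
  simp [treePairSeries, Finset.sum_add_distrib]

lemma treePairSeries_mul (F G : BinaryTree Unit → R) :
    treePairSeries (fun p q => F p * G q) = treeSeries F * treeSeries G := by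
  ext n
  simp only [treePairSeries, treeSeries, PowerSeries.coeff_mul, PowerSeries.coeff_mk,
    Finset.sum_mul_sum]

lemma treePairSeries_left (F : BinaryTree Unit → R) :
    treePairSeries (fun p _ => F p) = treeSeries F * treeSeries (fun _ => 1) := by
  simp only [← treePairSeries_mul, mul_one]

lemma treePairSeries_right (F : BinaryTree Unit → R) :
    treePairSeries (fun _ q => F q) = treeSeries (fun _ => 1) * treeSeries F := by
  simp only [← treePairSeries_mul, one_mul]

end Semiring

lemma sum_treesOfNumNodesEq_succ {M : Type*} [AddCommMonoid M] (n : ℕ)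
    (F : BinaryTree Unit → M) :
    ∑ t ∈ treesOfNumNodesEq (n + 1), F t =
      ∑ ij ∈ Finset.HasAntidiagonal.antidiagonal n,
        ∑ p ∈ treesOfNumNodesEq ij.1, ∑ q ∈ treesOfNumNodesEq ij.2, F (p △ q) := by
  rw [treesOfNumNodesEq_succ, Finset.sum_biUnion]
  · refine Finset.sum_congr rfl fun ij _ => ?_
    rw [pairwiseNode, Finset.sum_map, Finset.sum_product]
    rfl
  · intro ij _ ij' _ hne
    refine Finset.disjoint_left.2 fun t ht ht' => hne ?_
    simp only [pairwiseNode, Finset.mem_map, Finset.mem_product, mem_treesOfNumNodesEq] at ht ht'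
    obtain ⟨pq, ⟨left_eq, right_eq⟩, rfl⟩ := ht
    obtain ⟨pq', ⟨left_eq', right_eq'⟩, node_eq⟩ := ht'
    obtain rfl : pq' = pq := by simpa [Prod.ext_iff] using node_eq
    exact Prod.ext (left_eq.symm.trans left_eq') (right_eq.symm.trans right_eq')

lemma treeSeries_eq_nil_add [Semiring R] (F : BinaryTree Unit → R) :
    treeSeries F =
      PowerSeries.C (F .nil) + PowerSeries.X * treePairSeries (fun p q => F (p △ q)) := by
  ext n
  cases n with
  | zero => simp [treeSeries]
  | succ n =>
    simp [treeSeries, treePairSeries, sum_treesOfNumNodesEq_succ, PowerSeries.coeff_succ_X_mul]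

end TreeSeries

section CatalanEquation

variable {R : Type*} [CommRing R] {c : R⟦X⟧}

lemma eq_of_eq_one_add_X_mul_sq {d : R⟦X⟧} (hc : c = 1 + PowerSeries.X * c ^ 2)
    (hd : d = 1 + PowerSeries.X * d ^ 2) : c = d := by
  have isUnit_cofactor : IsUnit (1 - PowerSeries.X * (c + d)) := by
    simp [PowerSeries.isUnit_iff_constantCoeff]
  have mul_sub_eq_zero : (1 - PowerSeries.X * (c + d)) * (c - d) = 0 := by
    linear_combination hc - hd
  exact sub_eq_zero.1 (isUnit_cofactor.mul_right_eq_zero.1 mul_sub_eq_zero)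

lemma treeSeries_one_eq : treeSeries (fun _ => (1 : R)) =
    1 + PowerSeries.X * treeSeries (fun _ => (1 : R)) ^ 2 := by
  conv_lhs => rw [treeSeries_eq_nil_add, treePairSeries_left, map_one, ← sq]

lemma treeSeries_one (hc : c = 1 + PowerSeries.X * c ^ 2) :
    treeSeries (fun _ => (1 : R)) = c :=
  eq_of_eq_one_add_X_mul_sq treeSeries_one_eq hc

lemma eq_mul_of_eq_X_mul_add (hc : c = 1 + PowerSeries.X * c ^ 2) {A D : R⟦X⟧}
    (hA : A = PowerSeries.X * c * A + D) : A = c * D := by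
  linear_combination c * hA - A * hc

end CatalanEquation

section LevelSeries

open BinaryTree

lemma count_zero_nodeLevels {α : Type*} (t : BinaryTree α) : (nodeLevels t).count 0 = 1 := by
  induction t with
  | nil => rfl
  | node _ p q _ ihq =>
    rw [nodeLevels, Multiset.count_add, ihq, Multiset.count_eq_zero_of_notMem (by simp)]

lemma count_map_add_one (s : Multiset ℕ) (ℓ : ℕ) : (s.map (· + 1)).count (ℓ + 1) = s.count ℓ :=
  Multiset.count_map_eq_count' _ s (add_left_injective 1) ℓ

lemma countP_lt_map_add_one (s : Multiset ℕ) (ℓ : ℕ) :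
    (s.map (· + 1)).countP (· < ℓ + 1) = s.countP (· < ℓ) := by
  simp only [Multiset.countP_map, Nat.add_lt_add_iff_right, ← Multiset.countP_eq_card_filter]

lemma sortedPositionSum_nodeLevels_node {α : Type*} (a : α) (p q : BinaryTree α) (ℓ : ℕ) :
    sortedPositionSum (nodeLevels (.node a p q)) (ℓ + 1) =
      sortedPositionSum (nodeLevels p) ℓ + sortedPositionSum (nodeLevels q) (ℓ + 1) +
        (nodeLevels p).count ℓ * (nodeLevels q).countP (· < ℓ + 2) +
        (nodeLevels p).countP (· < ℓ) * (nodeLevels q).count (ℓ + 1) := by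
  have lt_succ_iff (m : ℕ) : m < ℓ + 2 ↔ m ≤ ℓ + 1 := Nat.lt_succ_iff
  rw [nodeLevels, sortedPositionSum_add, count_map_add_one, countP_lt_map_add_one,
    sortedPositionSum_map (f := (· + 1)) fun _ _ => Nat.succ_lt_succ]
  simp only [lt_succ_iff]

section Semiring

variable (R : Type*) [Semiring R] (ℓ : ℕ)

/-- The generating function of the number of nodes at level `ℓ` of the ordered trees. -/
def levelSeries : R⟦X⟧ := treeSeries fun t => ((nodeLevels t).count ℓ : R)

/-- The generating function of the number of nodes at levels below `ℓ` of the ordered trees. -/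
def belowSeries : R⟦X⟧ := treeSeries fun t => ((nodeLevels t).countP (· < ℓ) : R)

/-- The generating function of the sum of the bfs scores at level `ℓ` of the ordered trees. -/
def rankSeries : R⟦X⟧ := treeSeries fun t => (sortedPositionSum (nodeLevels t) ℓ : R)

lemma belowSeries_zero : belowSeries R 0 = 0 := by
  simp [belowSeries, treeSeries_zero]

lemma belowSeries_succ : belowSeries R (ℓ + 1) = belowSeries R ℓ + levelSeries R ℓ := by
  simp only [belowSeries, levelSeries, ← treeSeries_add, Nat.lt_succ_iff,
    countP_le_eq_countP_lt_add_count, Nat.cast_add]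

lemma rankSeries_zero : rankSeries R 0 = 0 := by
  simp [rankSeries, sortedPositionSum, count_zero_nodeLevels, treeSeries_zero]

end Semiring

variable {R : Type*} [CommRing R] {c : R⟦X⟧} (hc : c = 1 + PowerSeries.X * c ^ 2)
include hc

lemma levelSeries_zero : levelSeries R 0 = c := by
  simp [levelSeries, count_zero_nodeLevels, treeSeries_one hc]

lemma levelSeries_succ (ℓ : ℕ) :
    levelSeries R (ℓ + 1) = PowerSeries.X * c ^ 2 * levelSeries R ℓ := by
  have node_recursion : levelSeries R (ℓ + 1) =
      PowerSeries.X * c * levelSeries R (ℓ + 1) + PowerSeries.X * c * levelSeries R ℓ := by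
    have count_nil : (nodeLevels (.nil : BinaryTree Unit)).count (ℓ + 1) = 0 := by
      simp [nodeLevels]
    conv_lhs => rw [levelSeries, treeSeries_eq_nil_add, count_nil, Nat.cast_zero, map_zero]
    simp only [nodeLevels, Multiset.count_add, count_map_add_one, Nat.cast_add,
      treePairSeries_add, treePairSeries_left, treePairSeries_right, treeSeries_one hc,
      levelSeries]
    ring
  linear_combination eq_mul_of_eq_X_mul_add hc node_recursion

lemma levelSeries_eq (ℓ : ℕ) : levelSeries R ℓ = PowerSeries.X ^ ℓ * c ^ (2 * ℓ + 1) := by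
  induction ℓ with
  | zero => simp [levelSeries_zero hc]
  | succ ℓ ih => rw [levelSeries_succ hc, ih]; ring

lemma belowSeries_one : belowSeries R 1 = c := by
  rw [belowSeries_succ, belowSeries_zero, levelSeries_zero hc, zero_add]

lemma belowSeries_add_two (ℓ : ℕ) : belowSeries R (ℓ + 2) =
    c * belowSeries R (ℓ + 1) - PowerSeries.X * c ^ 2 * belowSeries R ℓ := by
  linear_combination belowSeries_succ R (ℓ + 1) -
    PowerSeries.X * c ^ 2 * belowSeries_succ R ℓ + levelSeries_succ hc ℓ -
    belowSeries R (ℓ + 1) * hc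

lemma rankSeries_succ (ℓ : ℕ) : rankSeries R (ℓ + 1) =
    PowerSeries.X * c ^ 2 * rankSeries R ℓ + levelSeries R (ℓ + 1) * belowSeries R (ℓ + 1) := by
  have node_recursion : rankSeries R (ℓ + 1) =
      PowerSeries.X * c * rankSeries R (ℓ + 1) +
        PowerSeries.X * (c * rankSeries R ℓ + levelSeries R ℓ * belowSeries R (ℓ + 2) +
          belowSeries R ℓ * levelSeries R (ℓ + 1)) := by
    have positionSum_nil :
        sortedPositionSum (nodeLevels (.nil : BinaryTree Unit)) (ℓ + 1) = 0 := by
      simp [sortedPositionSum, nodeLevels]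
    conv_lhs => rw [rankSeries, treeSeries_eq_nil_add, positionSum_nil, Nat.cast_zero, map_zero]
    simp only [sortedPositionSum_nodeLevels_node, Nat.cast_add, Nat.cast_mul, treePairSeries_add,
      treePairSeries_mul, treePairSeries_left, treePairSeries_right, treeSeries_one hc,
      rankSeries, levelSeries, belowSeries]
    ring
  have level_add_level : PowerSeries.X * c * (levelSeries R ℓ + levelSeries R (ℓ + 1)) =
      levelSeries R (ℓ + 1) := by
    linear_combination (PowerSeries.X * c - 1) * levelSeries_succ hc ℓ -
      PowerSeries.X * c * levelSeries R ℓ * hc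
  linear_combination eq_mul_of_eq_X_mul_add hc node_recursion +
    PowerSeries.X * c * levelSeries R ℓ * belowSeries_succ R (ℓ + 1) -
    PowerSeries.X * c * levelSeries R (ℓ + 1) * belowSeries_succ R ℓ +
    belowSeries R (ℓ + 1) * level_add_level

end LevelSeries

section FibonacciPolynomials

lemma coeff_fibP (n k : ℕ) : (fibP n).coeff k = (n - k).choose k := by
  rw [fibP, if_neg (by omega)]
  simp only [Int.toNat_natCast, finsetSum_coeff, coeff_C_mul_X_pow, Finset.sum_ite_eq,
    Finset.mem_range]
  split_ifs with hk
  · rfl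
  · rw [Nat.choose_eq_zero_of_lt (by omega), Nat.cast_zero]

lemma fibP_add_two (n : ℕ) : fibP (n + 2 : ℕ) = fibP (n + 1 : ℕ) + X * fibP n := by
  ext k
  cases k with
  | zero =>
    rw [coeff_add, mul_coeff_zero, coeff_fibP, coeff_fibP]
    simp
  | succ k =>
    rw [coeff_add, coeff_X_mul, coeff_fibP, coeff_fibP, coeff_fibP, Nat.add_sub_add_right]
    norm_cast
    rcases le_or_gt k n with hk | hk
    · rw [show n + 2 - (k + 1) = n - k + 1 by omega, Nat.choose_succ_succ', add_comm]
    · rw [Nat.choose_eq_zero_of_lt (by omega), Nat.choose_eq_zero_of_lt (by omega),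
        Nat.choose_eq_zero_of_lt (by omega)]

lemma fibPneg_zero : fibPneg 0 = 1 := by
  simp [fibPneg, fibP]

lemma fibPneg_one : fibPneg 1 = 1 := by
  simp [fibPneg, fibP]

lemma fibPneg_add_two (n : ℕ) :
    fibPneg (n + 2 : ℕ) = fibPneg (n + 1 : ℕ) - X * fibPneg n := by
  rw [fibPneg, fibP_add_two, add_comp, mul_comp, X_comp, neg_mul, ← sub_eq_add_neg]
  rfl

lemma derivative_fibPneg_add_two (n : ℕ) :
    derivative (fibPneg (n + 2 : ℕ)) =
      derivative (fibPneg (n + 1 : ℕ)) - fibPneg n - X * derivative (fibPneg n) := by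
  rw [fibPneg_add_two, derivative_sub, derivative_mul, derivative_X, one_mul, sub_sub]

end FibonacciPolynomials

section ClosedForms

variable {c : ℚ⟦X⟧} (hc : c = 1 + PowerSeries.X * c ^ 2)
include hc

lemma belowSeries_succ_eq (n : ℕ) :
    belowSeries ℚ (n + 1) = c ^ (n + 1) * (fibPneg n : ℚ⟦X⟧) := by
  induction n using Nat.twoStepInduction with
  | zero => simp [belowSeries_one hc, fibPneg_zero]
  | one => simp [belowSeries_add_two hc, belowSeries_one hc, belowSeries_zero, fibPneg_one, sq]
  | more n ih ih' =>
    rw [belowSeries_add_two hc, ih, ih', fibPneg_add_two]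
    push_cast
    ring

lemma rankSeries_eq (ℓ : ℕ) :
    rankSeries ℚ ℓ = PowerSeries.X ^ ℓ * c ^ (3 * ℓ + 1) *
      (PowerSeries.X * c * (derivative (fibPneg ℓ) : ℚ⟦X⟧) -
        (derivative (fibPneg (ℓ + 1 : ℕ)) : ℚ⟦X⟧)) := by
  induction ℓ with
  | zero => simp [rankSeries_zero, fibPneg_zero, fibPneg_one]
  | succ ℓ ih =>
    rw [rankSeries_succ hc, ih, belowSeries_succ_eq hc, levelSeries_eq hc,
      derivative_fibPneg_add_two]
    simp only [coe_sub, coe_mul, coe_X]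
    linear_combination PowerSeries.X ^ (ℓ + 1) * c ^ (3 * ℓ + 3) *
      (derivative (fibPneg (ℓ + 1 : ℕ)) : ℚ⟦X⟧) * hc

end ClosedForms

lemma mk_totalB_eq_rankSeries {ℓ : ℕ} (hℓ : 0 < ℓ) :
    PowerSeries.mk (fun n => (totalB n ℓ : ℚ)) = rankSeries ℚ ℓ := by
  simp only [totalB_eq_sum_trees _ hℓ, Nat.cast_sum, rankSeries, treeSeries]

/-- The generating function B_ℓ(z) = ∑_n totalB(n,ℓ) z^n satisfies
B_ℓ(z) = z^ℓ·C^{3ℓ+1}·(zC·(d/dz)f_ℓ(−z) − (d/dz)f_{ℓ+1}(−z)), where C = 1 + zC² is the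
Catalan generating function. -/
theorem totalB_genFun (ℓ : ℕ) (hℓ : 1 ≤ ℓ) (Cs : PowerSeries ℚ)
    (hC : Cs = 1 + PowerSeries.X * Cs ^ 2) :
    PowerSeries.mk (fun n => (totalB n ℓ : ℚ)) =
      PowerSeries.X ^ ℓ * Cs ^ (3 * ℓ + 1) *
        (PowerSeries.X * Cs *
            ((Polynomial.derivative (fibPneg (ℓ : ℤ))) : PowerSeries ℚ)
          - ((Polynomial.derivative (fibPneg ((ℓ : ℤ) + 1))) : PowerSeries ℚ)) := by
  rw [mk_totalB_eq_rankSeries hℓ, rankSeries_eq hC, Nat.cast_add_one]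
end
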